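/- arXiv:2504.13823 — 2 statements merged into one kernel-verified Lean document; each statement's English description precedes it below -/
import Mathlib

section
/- For every n ≥ 1 and all i,j ∈ S, the n-step belief kernel satisfies K^n((i,0),(j,0)) ≥ (1-ρ)^{n-1} · ρ · (P^n)(i,j). -/
open scoped BigOperators

/-- Transition kernel of the belief Markov chain of an intermittently observable
Markov chain with transition matrix `P` and observation probability `ρ`:
`K((s,η),(s,η+1)) = 1-ρ`, `K((s,η),(j,0)) = ρ·(P^(η+1))(s,j)`, and `0` otherwise. -/
noncomputable def beliefK {S : Type*} [Fintype S] [DecidableEq S]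
    (P : Matrix S S ℝ) (ρ : ℝ) : S × ℕ → S × ℕ → ℝ :=
  fun p q =>
    if q.2 = p.2 + 1 ∧ q.1 = p.1 then 1 - ρ
    else if q.2 = 0 then ρ * (P ^ (p.2 + 1)) p.1 q.1
    else 0

/-- `kIter K m` is the `(m+1)`-step kernel `K^(m+1)`; that is `kIter K 0 = K^1 = K`,
and `K^(m+1)(p,q) = Σ_r K^m(p,r)·K(r,q)`. -/
noncomputable def kIter {X : Type*} (K : X → X → ℝ) : ℕ → X → X → ℝ
  | 0 => K
  | n + 1 => fun p q => ∑' r : X, kIter K n p r * K r q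

/-! Each step is observed with probability `ρ` independently of the hidden state, and the hidden
state evolves by `P` whether or not it is observed. Hence the belief chain started at `(i, η)` is
at `(j, 0)` after `n ≥ 1` steps with probability exactly `ρ * (P ^ (η + n)) i j`: conditioning on
the first step, both outcomes (the age grows, or a state is observed) contribute this same value,
with weights `1 - ρ` and `ρ`, the second one by Chapman–Kolmogorov. The factor
`(1 - ρ) ^ (n - 1) ≤ 1` of the lower bound is the loss from keeping only the trajectories on which
the observation at step `n` is the first. -/

section FiniteRows

variable {X : Type*} {K : X → X → ℝ}

theorem hasFiniteSupport_kIter (hK : ∀ p, (K p).HasFiniteSupport) (m : ℕ) (p : X) :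
    (kIter K m p).HasFiniteSupport := by
  induction m with
  | zero => exact hK p
  | succ m ih =>
    refine (ih.biUnion fun r _ => hK r).subset fun q hq => ?_
    obtain ⟨r, hr⟩ : ∃ r, kIter K m p r * K r q ≠ 0 := by
      by_contra! h
      exact hq ((tsum_congr h).trans tsum_zero)
    exact Set.mem_biUnion (left_ne_zero_of_mul hr) (right_ne_zero_of_mul hr)

theorem kIter_succ_eq_tsum_mul_kIter (hK : ∀ p, (K p).HasFiniteSupport) (m : ℕ) (p q : X) :
    kIter K (m + 1) p q = ∑' r, K p r * kIter K m r q := by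
  induction m generalizing q with
  | zero => rfl
  | succ m ih =>
    have tsum_row (f : X → ℝ) : ∑' t, K p t * f t = ∑ t ∈ (hK p).toFinset, K p t * f t :=
      tsum_eq_sum fun t ht => by
        rw [Function.notMem_support.1 (mt (hK p).mem_toFinset.2 ht), zero_mul]
    have summable_step (t : X) : Summable fun r => kIter K m t r * K r q :=
      summable_of_hasFiniteSupport ((hasFiniteSupport_kIter hK m t).mul_left (K · q))
    calc kIter K (m + 2) p q
        = ∑' r, (∑' t, K p t * kIter K m t r) * K r q := tsum_congr fun r => by rw [ih]
      _ = ∑' r, ∑ t ∈ (hK p).toFinset, K p t * (kIter K m t r * K r q) := by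
        simp only [tsum_row, Finset.sum_mul, mul_assoc]
      _ = ∑ t ∈ (hK p).toFinset, ∑' r, K p t * (kIter K m t r * K r q) :=
        Summable.tsum_finsetSum fun t _ => (summable_step t).mul_left _
      _ = ∑ t ∈ (hK p).toFinset, K p t * kIter K (m + 1) t q := by
        simp only [tsum_mul_left, kIter]
      _ = ∑' t, K p t * kIter K (m + 1) t q := (tsum_row _).symm

end FiniteRows

section BeliefKernel

variable {S : Type*} [Fintype S] [DecidableEq S] (P : Matrix S S ℝ) (ρ : ℝ)

theorem beliefK_apply_succ (s : S) (η : ℕ) : beliefK P ρ (s, η) (s, η + 1) = 1 - ρ := by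
  simp [beliefK]

theorem beliefK_apply_zero (s j : S) (η : ℕ) :
    beliefK P ρ (s, η) (j, 0) = ρ * (P ^ (η + 1)) s j := by
  simp [beliefK]

theorem beliefK_eq_zero_of_notMem {p q : S × ℕ}
    (hq : q ∉ insert (p.1, p.2 + 1) ((Finset.univ : Finset S) ×ˢ {0})) :
    beliefK P ρ p q = 0 := by
  simp only [Finset.mem_insert, Finset.mem_product, Finset.mem_univ, Finset.mem_singleton,
    true_and, not_or, Prod.ext_iff] at hq
  rw [beliefK, if_neg (fun h => hq.1 h.symm), if_neg hq.2]

theorem hasFiniteSupport_beliefK (p : S × ℕ) : (beliefK P ρ p).HasFiniteSupport :=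
  (Finset.finite_toSet _).subset fun _ hq => not_not.1 (mt (beliefK_eq_zero_of_notMem P ρ) hq)

theorem tsum_beliefK_mul (f : S × ℕ → ℝ) (s : S) (η : ℕ) :
    ∑' q, beliefK P ρ (s, η) q * f q =
      (1 - ρ) * f (s, η + 1) + ∑ j, ρ * (P ^ (η + 1)) s j * f (j, 0) := by
  rw [tsum_eq_sum fun q hq => by rw [beliefK_eq_zero_of_notMem P ρ hq, zero_mul],
    Finset.sum_insert (by simp), Finset.sum_product]
  simp only [Finset.sum_singleton, beliefK_apply_succ, beliefK_apply_zero]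

theorem stmt5_general (m : ℕ) (i j : S) (η : ℕ) :
    kIter (beliefK P ρ) m (i, η) (j, 0) = ρ * (P ^ (η + m + 1)) i j := by
  induction m generalizing i η with
  | zero => exact beliefK_apply_zero P ρ i j η
  | succ m ih =>
    have chapman_kolmogorov :
        (P ^ (η + (m + 1) + 1)) i j = ∑ k, (P ^ (η + 1)) i k * (P ^ (m + 1)) k j := by
      rw [← Matrix.mul_apply, ← pow_add, add_right_comm]
    calc kIter (beliefK P ρ) (m + 1) (i, η) (j, 0)
        = ∑' q, beliefK P ρ (i, η) q * kIter (beliefK P ρ) m q (j, 0) :=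
        kIter_succ_eq_tsum_mul_kIter (hasFiniteSupport_beliefK P ρ) m _ _
      _ = (1 - ρ) * (ρ * (P ^ (η + 1 + m + 1)) i j) +
          ∑ k, ρ * (P ^ (η + 1)) i k * (ρ * (P ^ (0 + m + 1)) k j) := by
        simp only [tsum_beliefK_mul, ih]
      _ = (1 - ρ) * (ρ * (P ^ (η + (m + 1) + 1)) i j) +
          ρ * (ρ * ∑ k, (P ^ (η + 1)) i k * (P ^ (m + 1)) k j) := by
        simp only [Finset.mul_sum, zero_add, add_assoc, add_comm 1 m, mul_assoc, mul_left_comm _ ρ]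
      _ = ρ * (P ^ (η + (m + 1) + 1)) i j := by
        rw [← chapman_kolmogorov]
        ring

end BeliefKernel

/-- For every n ≥ 1 (here n = m + 1, so that `kIter (beliefK P ρ) m` is the
n-step kernel K^n), the n-step belief kernel satisfies
K^n((i,0),(j,0)) ≥ (1-ρ)^(n-1) · ρ · (P^n)(i,j). -/
theorem stmt5 {S : Type*} [Fintype S] [DecidableEq S] [Nonempty S]
    (P : Matrix S S ℝ) (ρ : ℝ) (hρ0 : 0 < ρ) (hρ1 : ρ ≤ 1)
    (hPnn : ∀ s s', 0 ≤ P s s') (hProw : ∀ s, ∑ s', P s s' = 1) :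
    ∀ (m : ℕ) (i j : S),
      (1 - ρ) ^ m * ρ * (P ^ (m + 1)) i j ≤ kIter (beliefK P ρ) m (i, 0) (j, 0) := by
  intro m i j
  rw [stmt5_general, zero_add, mul_assoc]
  exact mul_le_of_le_one_left (mul_nonneg hρ0.le (Matrix.pow_apply_nonneg hPnn _ _ _))
    (pow_le_one₀ (sub_nonneg.2 hρ1) (sub_le_self 1 hρ0.le))
end

section
/- Assume ρ ∈ (0,1) and P is irreducible (for all s,s' ∈ S there exists n ≥ 1 with (P^n)(s,s') > 0). Then the belief Markov chain is irreducible: for all states p, q ∈ S × ℕ there exists m ≥ 1 with K^m(p,q) > 0. -/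
open scoped BigOperators

/-!
The powers of an irreducible nonnegative matrix `P` have positive `(s, s')` entry for arbitrarily
large exponents, since cycles at `s'` can be appended. Hence `(s', η')` is reached from `(s, η)` by
leaving the chain unobserved until the age is `n - 1` with `0 < (P ^ n) s s'`, then observing `s'`,
then leaving the chain unobserved for `η'` more steps. Every state has finitely many successors, so
the sums over intermediate states are finite and a path of positive steps has positive weight.
-/

open Function Relation Set

theorem matrix_mul_apply_pos {l m n R : Type*} [Fintype m] [Semiring R] [PartialOrder R]
    [IsStrictOrderedRing R] {A : Matrix l m R} {B : Matrix m n R} (hA : ∀ i j, 0 ≤ A i j)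
    (hB : ∀ j k, 0 ≤ B j k) {i : l} {j : m} {k : n} (hij : 0 < A i j) (hjk : 0 < B j k) :
    0 < (A * B) i k := by
  rw [Matrix.mul_apply]
  exact Finset.sum_pos' (fun x _ => mul_nonneg (hA i x) (hB x k))
    ⟨j, Finset.mem_univ j, mul_pos hij hjk⟩

theorem exists_gt_pow_apply_pos_of_isIrreducible {n R : Type*} [Fintype n] [DecidableEq n]
    [Ring R] [LinearOrder R] [IsStrictOrderedRing R] {A : Matrix n n R} (hA : A.IsIrreducible)
    (N : ℕ) (i j : n) : ∃ k > N, 0 < (A ^ k) i j := by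
  have exists_pow_pos := (Matrix.isIrreducible_iff_exists_pow_pos hA.nonneg).1 hA
  induction N with
  | zero => exact exists_pow_pos i j
  | succ N ih =>
    obtain ⟨k, hk, hij⟩ := ih
    obtain ⟨c, hc, hjj⟩ := exists_pow_pos j j
    refine ⟨k + c, by lia, ?_⟩
    rw [pow_add]
    exact matrix_mul_apply_pos (Matrix.pow_apply_nonneg hA.nonneg k)
      (Matrix.pow_apply_nonneg hA.nonneg c) hij hjj

section Kernel

variable {X : Type*} {K : X → X → ℝ}

/-- The one-step relation of a kernel `K`: a step from `p` to `q` has positive weight. Its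
transitive closure describes which states are accessible in at least one step. -/
def CanStep (K : X → X → ℝ) (p q : X) : Prop :=
  0 < K p q

theorem kIter_nonneg (hK : ∀ p q, 0 ≤ K p q) (m : ℕ) (p q : X) : 0 ≤ kIter K m p q := by
  induction m generalizing q with
  | zero => exact hK p q
  | succ m ih => exact tsum_nonneg fun r => mul_nonneg (ih r) (hK r q)

theorem finite_support_kIter (hfin : ∀ p, (support (K p)).Finite) (m : ℕ) (p : X) :
    (support (kIter K m p)).Finite := by
  induction m with
  | zero => exact hfin p
  | succ m ih =>
    refine (ih.biUnion fun r _ => hfin r).subset fun q hq => ?_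
    obtain ⟨r, hr⟩ : ∃ r, kIter K m p r * K r q ≠ 0 := by
      by_contra! hzero
      exact hq ((tsum_congr hzero).trans tsum_zero)
    exact mem_biUnion (left_ne_zero_of_mul hr) (right_ne_zero_of_mul hr)

theorem kIter_succ_pos (hK : ∀ p q, 0 ≤ K p q) (hfin : ∀ p, (support (K p)).Finite) {m : ℕ}
    {p r q : X} (hpr : 0 < kIter K m p r) (hrq : 0 < K r q) : 0 < kIter K (m + 1) p q := by
  have hsum : Summable fun x => kIter K m p x * K x q :=
    summable_of_hasFiniteSupport <|
      (finite_support_kIter hfin m p).subset fun _ => left_ne_zero_of_mul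
  exact hsum.tsum_pos (fun x => mul_nonneg (kIter_nonneg hK m p x) (hK x q)) r (mul_pos hpr hrq)

theorem exists_kIter_pos_of_transGen (hK : ∀ p q, 0 ≤ K p q)
    (hfin : ∀ p, (support (K p)).Finite) {p q : X} (hpq : TransGen (CanStep K) p q) :
    ∃ m, 0 < kIter K m p q := by
  induction hpq with
  | single hstep => exact ⟨0, hstep⟩
  | tail _ hstep ih =>
    obtain ⟨m, hm⟩ := ih
    exact ⟨m + 1, kIter_succ_pos hK hfin hm hstep⟩

end Kernel

section BeliefChain

variable {S : Type*} [Fintype S] [DecidableEq S] {P : Matrix S S ℝ} {ρ : ℝ}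

theorem beliefK_age_succ (P : Matrix S S ℝ) (ρ : ℝ) (s : S) (η : ℕ) :
    beliefK P ρ (s, η) (s, η + 1) = 1 - ρ := by
  simp [beliefK]

theorem beliefK_age_zero (P : Matrix S S ℝ) (ρ : ℝ) (p : S × ℕ) (j : S) :
    beliefK P ρ p (j, 0) = ρ * (P ^ (p.2 + 1)) p.1 j := by
  simp [beliefK]

theorem beliefK_nonneg (hρ0 : 0 ≤ ρ) (hρ1 : ρ ≤ 1) (hP : ∀ s s', 0 ≤ P s s') (p q : S × ℕ) :
    0 ≤ beliefK P ρ p q := by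
  unfold beliefK
  split_ifs
  · exact sub_nonneg.2 hρ1
  · exact mul_nonneg hρ0 (Matrix.pow_apply_nonneg hP _ _ _)
  · exact le_rfl

theorem finite_support_beliefK (P : Matrix S S ℝ) (ρ : ℝ) (p : S × ℕ) :
    (support (beliefK P ρ p)).Finite := by
  refine ((finite_range fun j : S => (j, 0)).insert (p.1, p.2 + 1)).subset ?_
  rintro ⟨j, η⟩ hq
  by_cases haging : η = p.2 + 1 ∧ j = p.1
  · exact Or.inl (Prod.ext haging.2 haging.1)
  · have hη : η = 0 := by
      by_contra hη
      exact hq (by simp [beliefK, haging, hη])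
    exact Or.inr ⟨j, by rw [hη]⟩

theorem canStep_beliefK_observe (hρ : 0 < ρ) {s j : S} {η : ℕ} (hpos : 0 < (P ^ (η + 1)) s j) :
    CanStep (beliefK P ρ) (s, η) (j, 0) := by
  rw [CanStep, beliefK_age_zero]
  exact mul_pos hρ hpos

theorem reflTransGen_beliefK_aging (hρ : ρ < 1) (s : S) {η η' : ℕ} (hη : η ≤ η') :
    ReflTransGen (CanStep (beliefK P ρ)) (s, η) (s, η') := by
  induction hη with
  | refl => exact .refl
  | step _ ih =>
    refine ih.tail ?_
    rw [CanStep, beliefK_age_succ]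
    exact sub_pos.2 hρ

theorem transGen_beliefK_of_isIrreducible (hρ0 : 0 < ρ) (hρ1 : ρ < 1) (hP : P.IsIrreducible)
    (p q : S × ℕ) : TransGen (CanStep (beliefK P ρ)) p q := by
  obtain ⟨s, η⟩ := p
  obtain ⟨s', η'⟩ := q
  obtain ⟨_ | n, hn, hpos⟩ := exists_gt_pow_apply_pos_of_isIrreducible hP η s s'
  · exact absurd hn (Nat.not_lt_zero η)
  · have hwait : ReflTransGen (CanStep (beliefK P ρ)) (s, η) (s, n) :=
      reflTransGen_beliefK_aging hρ1 s (Nat.le_of_lt_succ hn)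
    have hobserve : CanStep (beliefK P ρ) (s, n) (s', 0) := canStep_beliefK_observe hρ0 hpos
    have hage : ReflTransGen (CanStep (beliefK P ρ)) (s', 0) (s', η') :=
      reflTransGen_beliefK_aging hρ1 s' η'.zero_le
    exact (TransGen.tail' hwait hobserve).trans_left hage

theorem stmt8_general (hρ0 : 0 < ρ) (hρ1 : ρ < 1) (hP : P.IsIrreducible) (p q : S × ℕ) :
    ∃ m : ℕ, 0 < kIter (beliefK P ρ) m p q :=
  exists_kIter_pos_of_transGen (beliefK_nonneg hρ0.le hρ1.le hP.nonneg)
    (finite_support_beliefK P ρ) (transGen_beliefK_of_isIrreducible hρ0 hρ1 hP p q)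

end BeliefChain

/-- The belief chain is irreducible: for all states p, q there is n ≥ 1
(here n = m + 1, so that `kIter (beliefK P ρ) m` is the n-step kernel K^n)
with K^n(p,q) > 0. -/
theorem stmt8 {S : Type*} [Fintype S] [DecidableEq S] [Nonempty S]
    (P : Matrix S S ℝ) (ρ : ℝ) (hρ0 : 0 < ρ) (hρ1 : ρ < 1)
    (hPnn : ∀ s s', 0 ≤ P s s') (hProw : ∀ s, ∑ s', P s s' = 1)
    (hirr : ∀ s s' : S, ∃ n : ℕ, 1 ≤ n ∧ 0 < (P ^ n) s s') :
    ∀ p q : S × ℕ, ∃ m : ℕ, 0 < kIter (beliefK P ρ) m p q :=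
  stmt8_general hρ0 hρ1 ((Matrix.isIrreducible_iff_exists_pow_pos hPnn).2 hirr)
end
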